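/- arXiv:2203.06143 — 2 statements merged into one kernel-verified Lean document; each statement's English description precedes it below -/
import Mathlib

section
/- Let D be a generalized twisted drawing of K_n with n ≥ 3, with distinguished point O. Then the cell of D containing O and the unbounded cell of D each have at least one vertex of D on their boundary; that is, both are vi-cells. -/
/-!
In polar coordinates around `O` (the angle measured in turns from the distinguished ray, and the
logarithm of the distance as height) the drawing lives on a cylinder. The c-monotonicity makes each
edge the graph of a continuous function over an interval of angles shorter than a full turn
(`exists_chart`), and each of these intervals contains the angle `0` of the ray. So an edge between
vertices at angles `s < t` in `[0, 1]` covers `[t, s + 1]` (`Wraps`), and the drawing becomes a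
combinatorial object on the cylinder (`Cyl`, `SimpleDrawing.exists_cyl`).

A vertex with no edge below it is joined to `O` by a segment avoiding the drawing, hence lies on the
boundary of the cell of `O`; a vertex with no edge above it lies on the boundary of the unbounded
cell. As `Cyl` is invariant under turning the cylinder upside down, everything rests on
`Cyl.exists_visible`: some vertex has no edge below it.

The three edges of a triangle `a < b < c` meet only in its vertices. Therefore, wherever they are
defined together, their heights are ordered either as `ab < ac < bc` (`Cyl.Pos`) or as
`bc < ac < ab` (`Cyl.Neg`). Independent edges cross at most once, which forbids the sign patterns
`(+, +, -, -)` and `(-, -, +, +)` on the triples `abc, abd, acd, bcd` of four vertices (`Cyl.no_PPNN`,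
`Cyl.no_NNPP`).

Let `kl`, with `k` before `l`, be the edge crossing the ray closest to `O`. If it ends on the ray,
that end has no edge below it. Otherwise, comparing heights on the ray shows that `k` and `l` are
consecutive in angle, that `klm` is positive for `m` after `l`, and that `mkl` is negative for `m`
before `k`. An edge passing below a vertex has both ends before it or both after it. By the
forbidden patterns an edge below `k` joins two vertices `a, b` before `k`
(`Cyl.no_block_right`), and an edge below `l` joins two vertices `c, d` after `l`
(`Cyl.no_block_left`). If both exist, then `ab` and `cd` cross twice (`Cyl.no_block_both`). So `k`
or `l` has no edge below it.

A vertex on the ray itself needs care, since its angle may count as `0` or as `1`. `Cyl.no_cycle`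
shows that such a vertex behaves consistently where it matters.
-/

open Set

/-- Points of the plane. -/
abbrev Pt : Type := ℝ × ℝ

/-- `A` is a simple (continuous, injective) arc from `p` to `q`. -/
def IsSimpleArc (A : Set Pt) (p q : Pt) : Prop :=
  ∃ f : ℝ → Pt, ContinuousOn f (Set.Icc 0 1) ∧ Set.InjOn f (Set.Icc 0 1) ∧
    f 0 = p ∧ f 1 = q ∧ A = f '' Set.Icc 0 1

/-- A simple drawing of the complete graph `K n` in the plane:  vertices are distinct
points, edges are simple arcs connecting their endpoints, no edge passes through a
vertex other than its endpoints, two edges sharing an endpoint meet exactly in that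
endpoint, and two independent edges meet in at most one point. -/
structure SimpleDrawing (n : ℕ) where
  vtx : Fin n → Pt
  vtx_inj : Function.Injective vtx
  arc : Fin n → Fin n → Set Pt
  arc_symm : ∀ i j, arc i j = arc j i
  arc_simple : ∀ i j, i ≠ j → IsSimpleArc (arc i j) (vtx i) (vtx j)
  vtx_not_mem : ∀ i j k, i ≠ j → k ≠ i → k ≠ j → vtx k ∉ arc i j
  adj_inter : ∀ i j k, i ≠ j → i ≠ k → j ≠ k → arc i j ∩ arc i k = {vtx i}
  indep_inter : ∀ i j k l, i ≠ j → k ≠ l → i ≠ k → i ≠ l → j ≠ k → j ≠ l →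
    (arc i j ∩ arc k l).Subsingleton

namespace SimpleDrawing

variable {n : ℕ}

/-- The union of all edges of the drawing. -/
def drawingSet (D : SimpleDrawing n) : Set Pt :=
  ⋃ (i : Fin n) (j : Fin n) (_ : i ≠ j), D.arc i j

/-- The edges `v_i v_j` and `v_k v_l` cross: they meet in a point that is not a common
endpoint of the two edges. -/
def Crosses (D : SimpleDrawing n) (i j k l : Fin n) : Prop :=
  ∃ x : Pt, x ∈ D.arc i j ∧ x ∈ D.arc k l ∧
    ¬ ((x = D.vtx i ∨ x = D.vtx j) ∧ (x = D.vtx k ∨ x = D.vtx l))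

end SimpleDrawing

/-- The ray emanating from `O` in direction `d`. -/
def rayFrom (O d : Pt) : Set Pt := {x : Pt | ∃ t : ℝ, 0 ≤ t ∧ x = O + t • d}

namespace SimpleDrawing

/-- `D` is c-monotone with respect to the point `O`: `O` does not lie on the drawing and
every ray emanating from `O` meets every edge of `D` in at most one point. -/
def CMonotoneAt (D : SimpleDrawing n) (O : Pt) : Prop :=
  O ∉ D.drawingSet ∧
    ∀ d : Pt, d ≠ 0 → ∀ i j : Fin n, i ≠ j → (rayFrom O d ∩ D.arc i j).Subsingleton

/-- `D` is c-monotone. -/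
def CMonotone (D : SimpleDrawing n) : Prop := ∃ O : Pt, D.CMonotoneAt O

/-- `D` is generalized twisted with respect to `O` and the ray from `O` with direction `d`:
`D` is c-monotone with respect to `O` and the ray meets every edge of `D`. -/
def GenTwistedAt (D : SimpleDrawing n) (O d : Pt) : Prop :=
  D.CMonotoneAt O ∧ d ≠ 0 ∧ ∀ i j : Fin n, i ≠ j → (rayFrom O d ∩ D.arc i j).Nonempty

/-- `D` is generalized twisted. -/
def GenTwisted (D : SimpleDrawing n) : Prop := ∃ O d : Pt, D.GenTwistedAt O d

/-- The vertices `v_1, …, v_n` of `D` appear counterclockwise around `O`, at angles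
`θ 0 < θ 1 < … < θ (n-1)`, all lying strictly (counterclockwise) between the angle `φ`
of the ray `r` with direction `d` and `φ + 2π`;  i.e. the vertices are labeled
counterclockwise around `O` and the ray `r` lies counterclockwise between the ray through
`v_n` and the ray through `v_1`. -/
def IsCCWLabeling (D : SimpleDrawing n) (O d : Pt) (φ : ℝ) (θ : Fin n → ℝ) : Prop :=
  (∃ s : ℝ, 0 < s ∧ d = s • ((Real.cos φ, Real.sin φ) : Pt)) ∧
  StrictMono θ ∧
  (∀ i : Fin n, θ i ∈ Set.Ioo φ (φ + 2 * Real.pi)) ∧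
  (∀ i : Fin n, ∃ s : ℝ, 0 < s ∧
    D.vtx i = O + s • ((Real.cos (θ i), Real.sin (θ i)) : Pt))

/-- `C` is a cell of `D`: a connected component of the complement of the drawing. -/
def IsCell (D : SimpleDrawing n) (C : Set Pt) : Prop :=
  ∃ x : Pt, x ∉ D.drawingSet ∧ C = connectedComponentIn D.drawingSetᶜ x

/-- `C` is a vi-cell of `D`: a cell whose closure contains a vertex. -/
def IsViCell (D : SimpleDrawing n) (C : Set Pt) : Prop :=
  D.IsCell C ∧ ∃ i : Fin n, D.vtx i ∈ closure C

/-- The triangle of `D` on the three vertices `i`, `j`, `k` (as a subset of the plane). -/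
def triangleSet (D : SimpleDrawing n) (i j k : Fin n) : Set Pt :=
  D.arc i j ∪ D.arc j k ∪ D.arc i k

/-- Two cells are antipodal if for every triangle of `D` they lie in different sides
(connected components of the complement) of that triangle. -/
def Antipodal (D : SimpleDrawing n) (C₁ C₂ : Set Pt) : Prop :=
  ∀ i j k : Fin n, i ≠ j → j ≠ k → i ≠ k →
    ∀ x ∈ C₁, ∀ y ∈ C₂,
      connectedComponentIn (D.triangleSet i j k)ᶜ x ≠
        connectedComponentIn (D.triangleSet i j k)ᶜ y

/-- `D` and `E` are weakly isomorphic: some bijection of the vertices preserves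
crossing pairs of edges. -/
def WeaklyIso (D E : SimpleDrawing n) : Prop :=
  ∃ σ : Fin n ≃ Fin n, ∀ i j k l : Fin n, i ≠ j → k ≠ l →
    (D.Crosses i j k l ↔ E.Crosses (σ i) (σ j) (σ k) (σ l))

end SimpleDrawing

/-! ### Drawings on the cylinder -/

/-- Edge `ij` wraps around the cylinder from the lifted vertex `j` at angle `t` to the lifted
vertex `i` at angle `s + 1`, where `s < t < s + 1`. Angles are measured in full turns; `dom i j`
is the set of angles covered by the edge and `val i j` its height there. -/
structure Wraps {n : ℕ} (θ : Fin n → ℝ) (dom : Fin n → Fin n → Set ℝ)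
    (val : Fin n → Fin n → ℝ → ℝ) (i : Fin n) (s : ℝ) (j : Fin n) (t : ℝ) : Prop where
  hi : ∃ m : ℤ, s = θ i + m
  hj : ∃ m : ℤ, t = θ j + m
  lt : s < t
  lt' : t < s + 1
  sub : Icc t (s + 1) ⊆ dom i j
  cont : ContinuousOn (val i j) (Icc t (s + 1))
  cover : ∀ x ∈ dom i j, ∃ m : ℤ, x + m ∈ Icc t (s + 1)

/-- A generalized twisted drawing in logarithmic polar coordinates, that is, on the cylinder
`ℝ/ℤ × ℝ`: vertex `i` sits at angle `θ i ∈ [0, 1)` and height `y i`, and the edge `ij` is the graph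
of `val i j` over `dom i j`, a set of angles containing the angle `0` of the distinguished ray.
Both are presented as `1`-periodic objects on `ℝ`. -/
structure Cyl (n : ℕ) where
  θ : Fin n → ℝ
  y : Fin n → ℝ
  dom : Fin n → Fin n → Set ℝ
  val : Fin n → Fin n → ℝ → ℝ
  θ_mem : ∀ i, θ i ∈ Ico (0 : ℝ) 1
  θ_inj : Function.Injective θ
  dom_symm : ∀ i j, dom i j = dom j i
  val_symm : ∀ i j, val i j = val j i
  dom_add_one : ∀ i j t, t + 1 ∈ dom i j ↔ t ∈ dom i j
  val_add_one : ∀ i j t, val i j (t + 1) = val i j t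
  θ_mem_dom : ∀ i j, i ≠ j → θ i ∈ dom i j
  val_θ : ∀ i j, i ≠ j → val i j (θ i) = y i
  adj : ∀ i j k t, i ≠ j → i ≠ k → j ≠ k → t ∈ dom i j → t ∈ dom i k →
    val i j t = val i k t → ∃ m : ℤ, t = θ i + m
  indep : ∀ i j k l t t', i ≠ j → k ≠ l → i ≠ k → i ≠ l → j ≠ k → j ≠ l →
    t ∈ dom i j → t ∈ dom k l → val i j t = val k l t →
    t' ∈ dom i j → t' ∈ dom k l → val i j t' = val k l t' → ∃ m : ℤ, t' = t + m
  arc : ∀ i j, i ≠ j → ∃ s t, 0 ≤ s ∧ s < t ∧ t ≤ 1 ∧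
    (Wraps θ dom val i s j t ∨ Wraps θ dom val j s i t)

namespace Cyl

variable {n : ℕ} (D : Cyl n)

/-- The edge `ij` wraps from `j` at angle `t` to `i` at angle `s + 1`. -/
abbrev W (i : Fin n) (s : ℝ) (j : Fin n) (t : ℝ) : Prop := Wraps D.θ D.dom D.val i s j t

lemma dom_add_int (i j : Fin n) (t : ℝ) (m : ℤ) : t + m ∈ D.dom i j ↔ t ∈ D.dom i j := by
  induction m using Int.induction_on with
  | zero => simp
  | succ k ih => rw [← ih]; push_cast; rw [← add_assoc, D.dom_add_one]
  | pred k ih =>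
    rw [← ih, ← D.dom_add_one i j (t + _)]; push_cast
    rw [show t + (-(k : ℝ) - 1) + 1 = t + -(k : ℝ) by ring]

lemma val_add_int (i j : Fin n) (t : ℝ) (m : ℤ) : D.val i j (t + m) = D.val i j t := by
  induction m using Int.induction_on with
  | zero => simp
  | succ k ih => rw [← ih]; push_cast; rw [← add_assoc, D.val_add_one]
  | pred k ih =>
    rw [← ih, ← D.val_add_one i j (t + (-(k : ℤ) - 1 : ℤ))]; push_cast
    rw [show t + (-(k : ℝ) - 1) + 1 = t + -(k : ℝ) by ring]

/-- The same drawing upside down. -/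
def flip : Cyl n where
  θ := D.θ
  y := fun i => - D.y i
  dom := D.dom
  val := fun i j t => - D.val i j t
  θ_mem := D.θ_mem
  θ_inj := D.θ_inj
  dom_symm := D.dom_symm
  val_symm := fun i j => by rw [D.val_symm]
  dom_add_one := D.dom_add_one
  val_add_one := fun i j t => by rw [D.val_add_one]
  θ_mem_dom := D.θ_mem_dom
  val_θ := fun i j h => by rw [D.val_θ i j h]
  adj := fun i j k t h1 h2 h3 h4 h5 h6 => D.adj i j k t h1 h2 h3 h4 h5 (neg_injective h6)
  indep := fun i j k l t t' h1 h2 h3 h4 h5 h6 h7 h8 h9 g1 g2 g3 =>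
    D.indep i j k l t t' h1 h2 h3 h4 h5 h6 h7 h8 (neg_injective h9) g1 g2 (neg_injective g3)
  arc := fun i j h => by
    obtain ⟨s, t, h0, h1, h2, h3⟩ := D.arc i j h
    refine ⟨s, t, h0, h1, h2, h3.imp ?_ ?_⟩ <;>
    exact fun w => ⟨w.hi, w.hj, w.lt, w.lt', w.sub, w.cont.neg, w.cover⟩

variable {D}

lemma int_absurd {x : ℝ} (m : ℤ) (h : x = m) (h0 : 0 < x) (h1 : x < 1) : False := by
  subst h
  have a : (0 : ℤ) < m := by exact_mod_cast h0
  have b : m < (1 : ℤ) := by exact_mod_cast h1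
  omega

lemma ne_of_pos {i j : Fin n} {s t : ℝ} (hi : ∃ m : ℤ, s = D.θ i + m)
    (hj : ∃ m : ℤ, t = D.θ j + m) (h : s < t) (h' : t < s + 1) : i ≠ j := by
  rintro rfl
  obtain ⟨a, rfl⟩ := hi
  obtain ⟨b, rfl⟩ := hj
  exact int_absurd (x := (b : ℝ) - a) (b - a) (by push_cast; ring) (by linarith) (by linarith)

lemma W.ne {i j : Fin n} {s t : ℝ} (w : D.W i s j t) : i ≠ j := ne_of_pos w.hi w.hj w.lt w.lt'

lemma val_pos {i j : Fin n} (h : i ≠ j) {s : ℝ} (hi : ∃ m : ℤ, s = D.θ i + m) :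
    D.val i j s = D.y i := by
  obtain ⟨m, rfl⟩ := hi
  rw [D.val_add_int, D.val_θ i j h]

lemma W.val_left {i j : Fin n} {s t : ℝ} (w : D.W i s j t) : D.val i j s = D.y i :=
  val_pos w.ne w.hi

lemma W.val_right {i j : Fin n} {s t : ℝ} (w : D.W i s j t) : D.val i j t = D.y j := by
  rw [D.val_symm]; exact val_pos w.ne.symm w.hj

lemma W.sub' {i j : Fin n} {s t : ℝ} (w : D.W i s j t) : Icc (t - 1) s ⊆ D.dom i j := by
  intro x hx
  rw [← D.dom_add_one]
  exact w.sub ⟨by linarith [hx.1], by linarith [hx.2]⟩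

lemma W.cont' {i j : Fin n} {s t : ℝ} (w : D.W i s j t) :
    ContinuousOn (D.val i j) (Icc (t - 1) s) := by
  have : D.val i j = D.val i j ∘ (fun x => x + 1) := by
    ext x; exact (D.val_add_one i j x).symm
  rw [this]
  refine w.cont.comp (by fun_prop) ?_
  intro x hx
  exact ⟨by linarith [hx.1], by linarith [hx.2]⟩

/-- Two continuous functions that never agree on an order-connected set are ordered the same way
throughout. -/
lemma lt_of_ne {f g : ℝ → ℝ} {S : Set ℝ} (hS : S.OrdConnected) (hf : ContinuousOn f S)
    (hg : ContinuousOn g S) (hne : ∀ x ∈ S, f x ≠ g x) {x : ℝ} (hx : x ∈ S) (h : f x < g x) :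
    ∀ z ∈ S, f z < g z := by
  intro z hz
  by_contra hcon
  have hcon : g z ≤ f z := not_lt.1 hcon
  have hp : IsPreconnected S := hS.isPreconnected
  obtain ⟨c, hc, e⟩ := hp.intermediate_value₂ hx hz hf hg h.le hcon
  exact hne c hc e

lemma exists_cross {f g : ℝ → ℝ} {p q : ℝ} (hpq : p ≤ q) (hf : ContinuousOn f (Icc p q))
    (hg : ContinuousOn g (Icc p q)) (h1 : f p < g p) (h2 : g q < f q) :
    ∃ x ∈ Ioo p q, f x = g x := by
  obtain ⟨c, hc, e⟩ := (isPreconnected_Icc (a := p) (b := q)).intermediate_value₂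
    (left_mem_Icc.2 hpq) (right_mem_Icc.2 hpq) hf hg h1.le h2.le
  refine ⟨c, ⟨lt_of_le_of_ne hc.1 ?_, lt_of_le_of_ne hc.2 ?_⟩, e⟩
  · rintro rfl; linarith
  · rintro rfl; linarith

/-- Independent edges cannot cross twice. -/
lemma double_cross {i j k l : Fin n} (hij : i ≠ j) (hkl : k ≠ l) (hik : i ≠ k) (hil : i ≠ l)
    (hjk : j ≠ k) (hjl : j ≠ l) {p q p' q' : ℝ} (hpq : p ≤ q) (hp' : p' ≤ q') (hqp : q ≤ p')
    (hqp' : q' ≤ p + 1)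
    (d1 : Icc p q ⊆ D.dom i j) (d2 : Icc p q ⊆ D.dom k l)
    (d3 : Icc p' q' ⊆ D.dom i j) (d4 : Icc p' q' ⊆ D.dom k l)
    (c1 : ContinuousOn (D.val i j) (Icc p q)) (c2 : ContinuousOn (D.val k l) (Icc p q))
    (c3 : ContinuousOn (D.val i j) (Icc p' q')) (c4 : ContinuousOn (D.val k l) (Icc p' q'))
    (h1 : D.val i j p < D.val k l p) (h2 : D.val k l q < D.val i j q)
    (h3 : D.val k l p' < D.val i j p') (h4 : D.val i j q' < D.val k l q') : False := by
  obtain ⟨x, hx, ex⟩ := exists_cross hpq c1 c2 h1 h2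
  obtain ⟨z, hz, ez⟩ := exists_cross hp' c4 c3 h3 h4
  obtain ⟨m, hm⟩ := D.indep i j k l x z hij hkl hik hil hjk hjl (d1 (Ioo_subset_Icc_self hx))
    (d2 (Ioo_subset_Icc_self hx)) ex (d3 (Ioo_subset_Icc_self hz)) (d4 (Ioo_subset_Icc_self hz))
    ez.symm
  exact int_absurd (x := z - x) m (by rw [hm]; ring) (by linarith [hx.2, hz.1])
    (by linarith [hx.1, hz.2])

/-- On the angles covered by all three edges of the triangle `abc`, the heights are in
lexicographic order `ab < ac < bc`, up to the coincidences at `c` and `a`. -/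
structure Pos (D : Cyl n) (a : Fin n) (sa : ℝ) (b c : Fin n) (sc : ℝ) : Prop where
  abbc : ∀ x ∈ Icc sc (sa + 1), D.val a b x < D.val b c x
  abac : ∀ x ∈ Ico sc (sa + 1), D.val a b x < D.val a c x
  acbc : ∀ x ∈ Ioc sc (sa + 1), D.val a c x < D.val b c x

/-- The antilexicographic counterpart of `Pos`. -/
structure Neg (D : Cyl n) (a : Fin n) (sa : ℝ) (b c : Fin n) (sc : ℝ) : Prop where
  abbc : ∀ x ∈ Icc sc (sa + 1), D.val b c x < D.val a b x
  abac : ∀ x ∈ Ico sc (sa + 1), D.val a c x < D.val a b x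
  acbc : ∀ x ∈ Ioc sc (sa + 1), D.val b c x < D.val a c x

lemma W.flip {i j : Fin n} {s t : ℝ} (w : D.W i s j t) : D.flip.W i s j t :=
  ⟨w.hi, w.hj, w.lt, w.lt', w.sub, w.cont.neg, w.cover⟩

lemma Neg.flip {a b c : Fin n} {sa sc : ℝ} (h : Neg D a sa b c sc) : Pos D.flip a sa b c sc :=
  ⟨fun x hx => neg_lt_neg (h.abbc x hx), fun x hx => neg_lt_neg (h.abac x hx),
    fun x hx => neg_lt_neg (h.acbc x hx)⟩

lemma Pos.flip {a b c : Fin n} {sa sc : ℝ} (h : Pos D a sa b c sc) : Neg D.flip a sa b c sc :=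
  ⟨fun x hx => neg_lt_neg (h.abbc x hx), fun x hx => neg_lt_neg (h.abac x hx),
    fun x hx => neg_lt_neg (h.acbc x hx)⟩

lemma Pos.unflip {a b c : Fin n} {sa sc : ℝ} (h : Pos D.flip a sa b c sc) : Neg D a sa b c sc :=
  ⟨fun x hx => neg_lt_neg_iff.1 (h.abbc x hx), fun x hx => neg_lt_neg_iff.1 (h.abac x hx),
    fun x hx => neg_lt_neg_iff.1 (h.acbc x hx)⟩

lemma ne_of_adj {i j k : Fin n} {s x : ℝ} (hij : i ≠ j) (hik : i ≠ k) (hjk : j ≠ k)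
    (hi : ∃ m : ℤ, s = D.θ i + m) (h1 : s < x) (h2 : x < s + 1) (d1 : x ∈ D.dom i j)
    (d2 : x ∈ D.dom i k) : D.val i j x ≠ D.val i k x := by
  intro e
  obtain ⟨m, hm⟩ := D.adj i j k x hij hik hjk d1 d2 e
  obtain ⟨m', hm'⟩ := hi
  exact int_absurd (x := x - s) (m - m') (by rw [hm, hm']; push_cast; ring) (by linarith)
    (by linarith)

lemma pos_of_lt {a b c : Fin n} {sa sb sc : ℝ} (wab : D.W a sa b sb) (wac : D.W a sa c sc)
    (wbc : D.W b sb c sc) (h : D.val a b sc < D.val b c sc) : Pos D a sa b c sc := by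
  have h1 := wab.lt; have h2 := wab.lt'; have h3 := wac.lt'; have h4 := wbc.lt
  have h5 := wbc.lt'
  have sab : Icc sc (sa + 1) ⊆ D.dom a b := (Icc_subset_Icc_left h4.le).trans wab.sub
  have sbc : Icc sc (sa + 1) ⊆ D.dom b c := (Icc_subset_Icc_right (by linarith)).trans wbc.sub
  have cab : ContinuousOn (D.val a b) (Icc sc (sa + 1)) :=
    wab.cont.mono (Icc_subset_Icc_left h4.le)
  have cbc : ContinuousOn (D.val b c) (Icc sc (sa + 1)) :=
    wbc.cont.mono (Icc_subset_Icc_right (by linarith))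
  have sac := wac.sub
  have cac := wac.cont
  have A : ∀ x ∈ Icc sc (sa + 1), D.val a b x < D.val b c x := by
    refine lt_of_ne ordConnected_Icc cab cbc ?_ (left_mem_Icc.2 h3.le) h
    intro x hx
    rw [D.val_symm a b]
    refine ne_of_adj wab.ne.symm wbc.ne wac.ne wab.hj (by linarith [hx.1]) (by linarith [hx.2]) ?_
      (sbc hx)
    rw [D.dom_symm]; exact sab hx
  have B : ∀ x ∈ Ico sc (sa + 1), D.val a b x < D.val a c x := by
    refine lt_of_ne ordConnected_Ico (cab.mono Ico_subset_Icc_self) (cac.mono Ico_subset_Icc_self)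
      ?_ (left_mem_Ico.2 h3) ?_
    · intro x hx
      exact ne_of_adj wab.ne wac.ne wbc.ne wab.hi (by linarith [hx.1]) (by linarith [hx.2])
        (sab (Ico_subset_Icc_self hx)) (sac (Ico_subset_Icc_self hx))
    · rw [wac.val_right, ← wbc.val_right]; exact h
  refine ⟨A, B, ?_⟩
  refine lt_of_ne ordConnected_Ioc (cac.mono Ioc_subset_Icc_self) (cbc.mono Ioc_subset_Icc_self)
      ?_ (right_mem_Ioc.2 h3) ?_
  · intro x hx
    rw [D.val_symm a c, D.val_symm b c]
    refine ne_of_adj wac.ne.symm wbc.ne.symm wab.ne wac.hj hx.1 (by linarith [hx.2]) ?_ ?_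
    · rw [D.dom_symm]; exact sac (Ioc_subset_Icc_self hx)
    · rw [D.dom_symm]; exact sbc (Ioc_subset_Icc_self hx)
  · have := A _ (right_mem_Icc.2 h3.le)
    rw [D.val_add_one, wab.val_left] at this
    rw [D.val_add_one, wac.val_left]
    exact this

/-- The three edges of a triangle do not cross, so its heights are in lexicographic or in
antilexicographic order. -/
lemma pos_or_neg {a b c : Fin n} {sa sb sc : ℝ} (wab : D.W a sa b sb) (wac : D.W a sa c sc)
    (wbc : D.W b sb c sc) : Pos D a sa b c sc ∨ Neg D a sa b c sc := by
  rcases lt_trichotomy (D.val a b sc) (D.val b c sc) with h | h | h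
  · exact .inl (pos_of_lt wab wac wbc h)
  · exfalso
    have h1 := wab.lt; have h3 := wac.lt'; have h4 := wbc.lt; have h5 := wbc.lt'
    rw [D.val_symm a b] at h
    refine ne_of_adj wab.ne.symm wbc.ne wac.ne wab.hj h4 h5 ?_ ?_ h
    · rw [D.dom_symm]; exact wab.sub ⟨h4.le, by linarith⟩
    · exact wbc.sub ⟨le_rfl, by linarith⟩
  · exact .inr (pos_of_lt wab.flip wac.flip wbc.flip (neg_lt_neg h)).unflip

lemma Pos.lt_c {a b c : Fin n} {sa sb sc : ℝ} (h : Pos D a sa b c sc) (wbc : D.W b sb c sc)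
    (hlt : sc < sa + 1) : D.val a b sc < D.y c := by
  rw [← wbc.val_right]; exact h.abbc sc ⟨le_rfl, hlt.le⟩

lemma Pos.a_lt {a b c : Fin n} {sa sb sc : ℝ} (h : Pos D a sa b c sc) (wab : D.W a sa b sb)
    (hlt : sc < sa + 1) : D.y a < D.val b c sa := by
  rw [← wab.val_left, ← D.val_add_one a b, ← D.val_add_one b c]
  exact h.abbc _ ⟨hlt.le, le_rfl⟩

lemma Neg.c_lt {a b c : Fin n} {sa sb sc : ℝ} (h : Neg D a sa b c sc) (wbc : D.W b sb c sc)
    (hlt : sc < sa + 1) : D.y c < D.val a b sc := by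
  rw [← wbc.val_right]; exact h.abbc sc ⟨le_rfl, hlt.le⟩

lemma Neg.lt_a {a b c : Fin n} {sa sb sc : ℝ} (h : Neg D a sa b c sc) (wab : D.W a sa b sb)
    (hlt : sc < sa + 1) : D.val b c sa < D.y a := by
  rw [← wab.val_left, ← D.val_add_one a b, ← D.val_add_one b c]
  exact h.abbc _ ⟨hlt.le, le_rfl⟩

/-- The sign pattern `+ + - -` on the triples `abc, abd, acd, bcd` is impossible: `ab` and `cd`
would cross both between `b` and `c` and between `d` and `a`. -/
lemma no_PPNN {a b c d : Fin n} {sa sb sc sd : ℝ} (wab : D.W a sa b sb) (wac : D.W a sa c sc)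
    (wad : D.W a sa d sd) (wbc : D.W b sb c sc) (wbd : D.W b sb d sd) (wcd : D.W c sc d sd)
    (h1 : Pos D a sa b c sc) (h2 : Pos D a sa b d sd) (h3 : Neg D a sa c d sd)
    (h4 : Neg D b sb c d sd) : False := by
  have := wab.lt; have := wbc.lt; have := wcd.lt; have := wad.lt'
  have := h1.lt_c wbc wac.lt'; have := h2.lt_c wbd wad.lt'
  have := h3.lt_a wac wad.lt'; have := h4.lt_a wbc wbd.lt'
  refine double_cross wcd.ne wab.ne wac.ne.symm wbc.ne.symm wad.ne.symm wbd.ne.symm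
    (p := sb) (q := sc) (p' := sd) (q' := sa + 1) (by linarith) (by linarith) (by linarith)
    (by linarith)
    ((Icc_subset_Icc (by linarith) (by linarith)).trans wcd.sub')
    ((Icc_subset_Icc (by linarith) (by linarith)).trans wab.sub)
    ((Icc_subset_Icc (by linarith) (by linarith)).trans wcd.sub)
    ((Icc_subset_Icc (by linarith) (by linarith)).trans wab.sub)
    (wcd.cont'.mono (Icc_subset_Icc (by linarith) (by linarith)))
    (wab.cont.mono (Icc_subset_Icc (by linarith) (by linarith)))
    (wcd.cont.mono (Icc_subset_Icc (by linarith) (by linarith)))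
    (wab.cont.mono (Icc_subset_Icc (by linarith) (by linarith)))
    ?_ ?_ ?_ ?_
  · rw [wab.val_right]; assumption
  · rw [wcd.val_left]; assumption
  · rw [wcd.val_right]; assumption
  · rw [D.val_add_one, D.val_add_one, wab.val_left]; assumption

/-- The pattern `- - + +` is `+ + - -` upside down. -/
lemma no_NNPP {a b c d : Fin n} {sa sb sc sd : ℝ} (wab : D.W a sa b sb) (wac : D.W a sa c sc)
    (wad : D.W a sa d sd) (wbc : D.W b sb c sc) (wbd : D.W b sb d sd) (wcd : D.W c sc d sd)
    (h1 : Neg D a sa b c sc) (h2 : Neg D a sa b d sd) (h3 : Pos D a sa c d sd)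
    (h4 : Pos D b sb c d sd) : False :=
  no_PPNN wab.flip wac.flip wad.flip wbc.flip wbd.flip wcd.flip h1.flip h2.flip h3.flip h4.flip

/-! ### A vertex visible from below -/

lemma no_cycle_aux {v p q : Fin n} {s sp sq : ℝ} (w1 : D.W v s p sp) (w2 : D.W p sp q sq)
    (w3 : D.W q sq v (s + 1)) (h : D.val v p sp < D.val q v sp) : False := by
  have h1 := w1.lt; have h2 := w2.lt; have h3 := w3.lt
  have h4 := w1.lt'; have h5 := w2.lt'; have h6 := w3.lt'
  have w3s := w3.sub'; have w3c := w3.cont'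
  rw [add_sub_cancel_right] at w3s w3c
  have A : ∀ x ∈ Icc sp sq, D.val v p x < D.val q v x := by
    refine lt_of_ne ordConnected_Icc (w1.cont.mono (Icc_subset_Icc_right h3.le))
      (w3c.mono (Icc_subset_Icc_left h1.le)) ?_ (left_mem_Icc.2 h2.le) h
    intro x hx
    rw [D.val_symm q v]
    refine ne_of_adj w1.ne w3.ne.symm w2.ne w1.hi (by linarith [hx.1]) (by linarith [hx.2])
      (w1.sub ⟨hx.1, by linarith [hx.2]⟩) ?_
    rw [D.dom_symm]; exact w3s ⟨by linarith [hx.1], hx.2⟩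
  have B : ∀ x ∈ Icc sq (s + 1), D.val v p x < D.val p q x := by
    refine lt_of_ne ordConnected_Icc (w1.cont.mono (Icc_subset_Icc_left h2.le))
      (w2.cont.mono (Icc_subset_Icc_right (by linarith))) ?_ (left_mem_Icc.2 h3.le) ?_
    · intro x hx
      rw [D.val_symm v p]
      refine ne_of_adj w1.ne.symm w2.ne w3.ne.symm w2.hi (by linarith [hx.1])
        (by linarith [hx.2]) ?_ (w2.sub ⟨hx.1, by linarith [hx.2]⟩)
      rw [D.dom_symm]; exact w1.sub ⟨by linarith [hx.1], hx.2⟩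
    · rw [w2.val_right, ← w3.val_left]; exact A sq (right_mem_Icc.2 h2.le)
  have C : ∀ x ∈ Icc (s + 1) (sp + 1), D.val q v x < D.val p q x := by
    refine lt_of_ne ordConnected_Icc (w3.cont.mono (Icc_subset_Icc_right (by linarith)))
      (w2.cont.mono (Icc_subset_Icc_left h3.le)) ?_ (left_mem_Icc.2 (by linarith)) ?_
    · intro x hx
      rw [D.val_symm p q]
      refine ne_of_adj w3.ne w2.ne.symm w1.ne w2.hj (by linarith [hx.1])
        (by linarith [hx.2]) (w3.sub ⟨hx.1, by linarith [hx.2]⟩) ?_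
      rw [D.dom_symm]; exact w2.sub ⟨by linarith [hx.1], hx.2⟩
    · have := B (s + 1) (right_mem_Icc.2 h3.le)
      rw [D.val_add_one v p, w1.val_left] at this
      rw [w3.val_right]; exact this
  have := C (sp + 1) (right_mem_Icc.2 (by linarith))
  rw [D.val_add_one, D.val_add_one, w2.val_left, ← w1.val_right] at this
  exact lt_asymm h this

/-- The edges of a triangle cannot each skip past the third vertex in the same rotational
direction: the heights would have to decrease cyclically. -/
lemma no_cycle {v p q : Fin n} {s sp sq : ℝ} (w1 : D.W v s p sp) (w2 : D.W p sp q sq)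
    (w3 : D.W q sq v (s + 1)) : False := by
  have h1 := w1.lt; have h2 := w2.lt; have h3 := w3.lt
  rcases lt_trichotomy (D.val v p sp) (D.val q v sp) with h | h | h
  · exact no_cycle_aux w1 w2 w3 h
  · rw [D.val_symm q v] at h
    have w3s := w3.sub'
    rw [add_sub_cancel_right] at w3s
    refine ne_of_adj w1.ne w3.ne.symm w2.ne w1.hi h1 (by linarith)
      (w1.sub ⟨le_rfl, by linarith⟩) ?_ h
    rw [D.dom_symm]; exact w3s ⟨h1.le, h2.le⟩
  · exact no_cycle_aux w1.flip w2.flip w3.flip (neg_lt_neg h)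

lemma eq_θ {i : Fin n} {s : ℝ} (hi : ∃ m : ℤ, s = D.θ i + m) (h0 : 0 ≤ s) (h1 : s < 1) :
    s = D.θ i := by
  obtain ⟨m, rfl⟩ := hi
  have h := D.θ_mem i
  have a : (-1 : ℤ) < m := by
    have : (-1 : ℝ) < m := by linarith [h.2]
    exact_mod_cast this
  have b : m < (1 : ℤ) := by
    have : (m : ℝ) < 1 := by linarith [h.1]
    exact_mod_cast this
  obtain rfl : m = 0 := by omega
  simp

lemma θ_eq_zero {i : Fin n} (hi : ∃ m : ℤ, (1 : ℝ) = D.θ i + m) : D.θ i = 0 := by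
  obtain ⟨m, hm⟩ := hi
  exact (eq_θ (s := 0) ⟨m - 1, by push_cast; linarith⟩ le_rfl one_pos).symm

lemma eq_θ_right {i : Fin n} {t : ℝ} (hi : ∃ m : ℤ, t = D.θ i + m) (h0 : 0 < t) (h1 : t ≤ 1)
    (h : 0 < D.θ i) : t = D.θ i := by
  rcases h1.lt_or_eq with h1 | rfl
  · exact eq_θ hi h0.le h1
  · linarith [θ_eq_zero hi]

/-- Two vertices off the distinguished ray are joined the long way round, across the ray. -/
lemma wraps {x z : Fin n} (hx : 0 < D.θ x) (hxz : D.θ x < D.θ z) :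
    D.W x (D.θ x) z (D.θ z) := by
  obtain ⟨s, t, h0, h1, h2, w | w⟩ := D.arc x z (by rintro rfl; exact lt_irrefl _ hxz)
  · have e1 := eq_θ w.hi h0 (by linarith)
    have e2 := eq_θ_right w.hj (by linarith) h2 (by linarith)
    rw [← e1, ← e2]; exact w
  · have e1 := eq_θ w.hi h0 (by linarith)
    have e2 := eq_θ_right w.hj (by linarith) h2 hx
    linarith

/-- A vertex before an edge `cd` is joined across the ray to `d`, also when `d` lies on the ray
and its angle counts as `1`. -/
lemma wraps_right {x c d : Fin n} {sc sd : ℝ} (w : D.W c sc d sd) (hd : sd ≤ 1)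
    (hx : 0 < D.θ x) (hxc : D.θ x < sc) : D.W x (D.θ x) d sd := by
  have hlt := w.lt
  have ec := eq_θ w.hi (by linarith) (by linarith)
  rcases hd.lt_or_eq with hd | rfl
  · have ed := eq_θ w.hj (by linarith) hd
    rw [ed]; exact wraps hx (by linarith)
  · have ed := θ_eq_zero w.hj
    obtain ⟨s, t, h0, h1, h2, w' | w'⟩ := D.arc x d (by rintro rfl; linarith)
    · have e1 := eq_θ w'.hi h0 (by linarith)
      have e2 : t = 1 := by
        rcases h2.lt_or_eq with h2 | h2
        · have := eq_θ w'.hj (by linarith) h2; linarith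
        · exact h2
      rw [← e1, ← e2]; exact w'
    · have e1 := eq_θ w'.hi h0 (by linarith)
      have e2 := eq_θ_right w'.hj (by linarith) h2 hx
      obtain rfl : s = 0 := by linarith
      subst e2
      have wxc : D.W x (D.θ x) c sc := by rw [ec]; exact wraps hx (by linarith)
      exact (no_cycle w' wxc (by simpa using w)).elim

/-- A vertex after an edge `ab` is joined across the ray to `a`, also when `a` lies on the ray
and its angle counts as `0`. -/
lemma wraps_left {x a b : Fin n} {sa sb : ℝ} (w : D.W a sa b sb) (ha : 0 ≤ sa)
    (hx : sb < D.θ x) : D.W a sa x (D.θ x) := by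
  have hlt := w.lt
  have hx1 := (D.θ_mem x).2
  have ea := eq_θ w.hi ha (by linarith)
  have eb := eq_θ w.hj (by linarith) (by linarith)
  rcases ha.lt_or_eq with ha | rfl
  · rw [ea]; exact wraps (by linarith) (by linarith)
  · obtain ⟨s, t, h0, h1, h2, w' | w'⟩ := D.arc a x (by rintro rfl; linarith)
    · have e1 := eq_θ w'.hi h0 (by linarith)
      have e2 := eq_θ_right w'.hj (by linarith) h2 (by linarith)
      rw [← e2, ea, ← e1]; exact w'
    · have e1 := eq_θ w'.hi h0 (by linarith)
      obtain rfl : t = 1 := by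
        rcases h2.lt_or_eq with h2 | h2
        · have := eq_θ w'.hj (by linarith) h2; linarith
        · exact h2
      subst e1
      have wbx : D.W b sb x (D.θ x) := by rw [eb]; exact wraps (by linarith) (by linarith)
      exact (no_cycle w wbx (by simpa using w')).elim

lemma zero_mem_dom {i j : Fin n} (h : i ≠ j) : (0 : ℝ) ∈ D.dom i j := by
  obtain ⟨s, t, h0, h1, h2, w | w⟩ := D.arc i j h
  · exact W.sub' w ⟨by linarith, h0⟩
  · rw [D.dom_symm]; exact W.sub' w ⟨by linarith, h0⟩

/-- An edge passing strictly below `x` has both its ends before `x` or both after `x`. -/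
lemma block {x i j : Fin n} (hx : 0 < D.θ x) (hij : i ≠ j) (hd : D.θ x ∈ D.dom i j)
    (hv : D.val i j (D.θ x) < D.y x) :
    (∃ a sa b sb, D.W a sa b sb ∧ 0 ≤ sa ∧ sb < D.θ x ∧ D.val a b (D.θ x) < D.y x) ∨
    (∃ c sc d sd, D.W c sc d sd ∧ sd ≤ 1 ∧ D.θ x < sc ∧ D.val c d (D.θ x) < D.y x) := by
  have key : ∀ i j s t, D.W i s j t → 0 ≤ s → t ≤ 1 → D.θ x ∈ D.dom i j →
      D.val i j (D.θ x) < D.y x →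
      (∃ a sa b sb, D.W a sa b sb ∧ 0 ≤ sa ∧ sb < D.θ x ∧ D.val a b (D.θ x) < D.y x) ∨
      (∃ c sc d sd, D.W c sc d sd ∧ sd ≤ 1 ∧ D.θ x < sc ∧ D.val c d (D.θ x) < D.y x) := by
    intro i j s t w h0 h2 hd hv
    have h1 := w.lt
    have hx1 := (D.θ_mem x).2
    have nt : t ≠ D.θ x := by
      intro e
      have := w.val_right
      have hh := eq_θ w.hj (by linarith) (by linarith)
      have : j = x := D.θ_inj (by linarith)
      subst this; rw [← e] at hv; linarith
    have ns : s ≠ D.θ x := by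
      intro e
      have := w.val_left
      have hh := eq_θ w.hi (by linarith) (by linarith)
      have : i = x := D.θ_inj (by linarith)
      subst this; rw [← e] at hv; linarith
    obtain ⟨m, hm⟩ := w.cover _ hd
    have a : (-1 : ℤ) < m := by
      have : (-1 : ℝ) < m := by linarith [hm.1]
      exact_mod_cast this
    have b : m < (2 : ℤ) := by
      have : (m : ℝ) < 2 := by linarith [hm.2]
      exact_mod_cast this
    obtain rfl | rfl : m = 0 ∨ m = 1 := by omega
    · left
      refine ⟨i, s, j, t, w, h0, lt_of_le_of_ne ?_ nt, hv⟩
      simpa using hm.1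
    · right
      refine ⟨i, s, j, t, w, h2, lt_of_le_of_ne ?_ ns.symm, hv⟩
      have := hm.2; push_cast at this; linarith
  obtain ⟨s, t, h0, h1, h2, w | w⟩ := D.arc i j hij
  · exact key i j s t w h0 h2 hd hv
  · exact key j i s t w h0 h2 (by rwa [D.dom_symm]) (by rwa [D.val_symm])

section lowest

variable {k l : Fin n}

/-- The vertices of an edge that is lowest on the distinguished ray are consecutive. -/
lemma consecutive (hk : 0 < D.θ k)
    (hmin : ∀ i j, i ≠ j → D.val k l 1 ≤ D.val i j 1) {x : Fin n} (h1 : D.θ k < D.θ x)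
    (h2 : D.θ x < D.θ l) : False := by
  have hl1 := (D.θ_mem l).2
  have wkx := wraps hk h1
  have wxl := wraps (hk.trans h1) h2
  rcases pos_or_neg wkx (wraps hk (h1.trans h2)) wxl with h | h
  · exact absurd (h.abac 1 ⟨hl1.le, by linarith⟩) (not_lt.2 (hmin _ _ wkx.ne))
  · exact absurd (h.acbc 1 ⟨hl1, by linarith⟩) (not_lt.2 (hmin _ _ wxl.ne))

/-- If `kl` is lowest on the distinguished ray, triangles `klm` with `m` last are positive. -/
lemma lowest_pos (hmin : ∀ i j, i ≠ j → D.val k l 1 ≤ D.val i j 1) {m : Fin n} {sk sl sm : ℝ}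
    (wkl : D.W k sk l sl) (wkm : D.W k sk m sm) (wlm : D.W l sl m sm) (h0 : 0 ≤ sk)
    (h1 : sm ≤ 1) : Pos D k sk l m sm := by
  rcases pos_or_neg wkl wkm wlm with h | h
  · exact h
  · exact absurd (h.abbc 1 ⟨h1, by linarith⟩) (not_lt.2 (hmin _ _ wlm.ne))

/-- If `kl` is lowest on the distinguished ray, triangles `mkl` with `m` first are negative. -/
lemma lowest_neg (hmin : ∀ i j, i ≠ j → D.val k l 1 ≤ D.val i j 1) {m : Fin n} {sk sl sm : ℝ}
    (wkl : D.W k sk l sl) (wmk : D.W m sm k sk) (wml : D.W m sm l sl) (h0 : 0 ≤ sm)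
    (h1 : sl ≤ 1) : Neg D m sm k l sl := by
  rcases pos_or_neg wmk wml wkl with h | h
  · exact absurd (h.abbc 1 ⟨h1, by linarith⟩) (not_lt.2 (hmin _ _ wmk.ne))
  · exact h

/-- If `kl` is lowest on the distinguished ray and `k` comes before `l`, no edge between two
vertices after `k` passes below `k`. -/
lemma no_block_right (hk : 0 < D.θ k) (hkl : D.θ k < D.θ l)
    (hmin : ∀ i j, i ≠ j → D.val k l 1 ≤ D.val i j 1) {c d : Fin n} {sc sd : ℝ}
    (wcd : D.W c sc d sd) (hd : sd ≤ 1) (hc : D.θ k < sc) (hv : D.val c d (D.θ k) < D.y k) :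
    False := by
  have hlt := wcd.lt
  have ec := eq_θ wcd.hi (by linarith) (by linarith)
  have wkl := wraps hk hkl
  have wkd := wraps_right wcd hd hk hc
  have wkc := wraps hk (ec ▸ hc)
  have hkd := wkd.lt'
  rcases lt_trichotomy sc (D.θ l) with h | h | h
  · exact consecutive hk hmin (x := c) (by linarith) (by linarith)
  · obtain rfl : c = l := D.θ_inj (by linarith)
    rw [ec] at wcd
    have := (lowest_pos hmin wkl wkd wcd hk.le hd).a_lt wkl hkd
    linarith
  · have hl := hk.trans hkl
    have wlc := wraps hl (ec ▸ h)
    have wld := wraps_right wcd hd hl h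
    have hld := wld.lt'
    have klc := lowest_pos hmin wkl wkc wlc hk.le (by linarith)
    have kld := lowest_pos hmin wkl wkd wld hk.le hd
    rw [ec] at wcd
    have kcd : Neg D k (D.θ k) c d sd := by
      rcases pos_or_neg wkc wkd wcd with g | g
      · have := g.a_lt wkc hkd; linarith
      · exact g
    have lcd : Neg D l (D.θ l) c d sd := by
      rcases pos_or_neg wlc wld wcd with g | g
      · exfalso
        -- any angle strictly between `d` and the next copy of `k` is covered by all the edges
        have m1 : sd < (sd + (D.θ k + 1)) / 2 := by linarith
        have m2 : (sd + (D.θ k + 1)) / 2 < D.θ k + 1 := by linarith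
        have e1 := g.acbc _ ⟨m1, by linarith⟩
        have e2 := kcd.acbc _ ⟨m1, m2.le⟩
        have e3 := kld.acbc _ ⟨m1, m2.le⟩
        linarith
      · exact g
    exact no_PPNN wkl wkc wkd wlc wld wcd klc kld kcd lcd

/-- The mirror image of `no_block_right`. -/
lemma no_block_left (hk : 0 < D.θ k) (hkl : D.θ k < D.θ l)
    (hmin : ∀ i j, i ≠ j → D.val k l 1 ≤ D.val i j 1) {a b : Fin n} {sa sb : ℝ}
    (wab : D.W a sa b sb) (ha : 0 ≤ sa) (hb : sb < D.θ l) (hv : D.val a b (D.θ l) < D.y l) :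
    False := by
  have hlt := wab.lt
  have hl1 := (D.θ_mem l).2
  have eb := eq_θ wab.hj (by linarith) (by linarith)
  have wkl := wraps hk hkl
  have wal := wraps_left wab ha hb
  have hal := wal.lt'
  rcases lt_trichotomy sb (D.θ k) with h | h | h
  · have wbk := wraps (D := D) (x := b) (z := k) (by linarith) (by linarith)
    have wbl := wraps (D := D) (x := b) (z := l) (by linarith) (by linarith)
    have wak := wraps_left wab ha h
    have akl := lowest_neg hmin wkl wak wal ha hl1.le
    have bkl := lowest_neg hmin wkl wbk wbl (by linarith) hl1.le
    rw [eb] at wab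
    have abl : Pos D a sa b l (D.θ l) := by
      rcases pos_or_neg wab wal wbl with g | g
      · exact g
      · have := g.c_lt wbl hal; linarith
    have abk : Pos D a sa b k (D.θ k) := by
      rcases pos_or_neg wab wak wbk with g | g
      · exact g
      · exfalso
        have m1 : D.θ l < (D.θ l + (sa + 1)) / 2 := by linarith
        have m2 : (D.θ l + (sa + 1)) / 2 < sa + 1 := by linarith
        have e1 := g.abac _ ⟨by linarith, m2⟩
        have e2 := akl.abac _ ⟨m1.le, m2⟩
        have e3 := abl.abac _ ⟨m1.le, m2⟩
        linarith
    exact no_PPNN wab wak wal wbk wbl wkl abk abl akl bkl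
  · obtain rfl : b = k := D.θ_inj (by linarith)
    rw [eb] at wab
    have := (lowest_neg hmin wkl wab wal ha hl1.le).c_lt wkl hal
    linarith
  · exact consecutive hk hmin (x := b) (by linarith) (by linarith)

/-- If `kl` is lowest on the distinguished ray, an edge `ab` before `k` cannot pass below `k`
while an edge `cd` after `l` passes below `l`: then `ab` and `cd` cross between `k` and `l`, and
they cross again either between `b` and `k` or between `l` and `c`. -/
lemma no_block_both (hk : 0 < D.θ k) (hkl : D.θ k < D.θ l)
    (hmin : ∀ i j, i ≠ j → D.val k l 1 ≤ D.val i j 1)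
    {a b : Fin n} {sa sb : ℝ}
    (wab : D.W a sa b sb) (ha : 0 ≤ sa) (hb : sb < D.θ k) (hv : D.val a b (D.θ k) < D.y k)
    {c d : Fin n} {sc sd : ℝ}
    (wcd : D.W c sc d sd) (hd : sd ≤ 1) (hc : D.θ l < sc) (hv' : D.val c d (D.θ l) < D.y l) :
    False := by
  have hab := wab.lt
  have hcd := wcd.lt
  have hl := hk.trans hkl
  have hl1 := (D.θ_mem l).2
  obtain rfl := eq_θ wab.hj (by linarith) (by linarith)
  obtain rfl := eq_θ wcd.hi (by linarith) (by linarith)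
  have hb0 : 0 < D.θ b := by linarith
  have wkl := wraps hk hkl
  have wak := wraps_left wab ha hb
  have wal := wraps_left wab ha (hb.trans hkl)
  have wac := wraps_left wab ha ((hb.trans hkl).trans hc)
  have wbk := wraps hb0 hb
  have wbl := wraps hb0 (hb.trans hkl)
  have wbc := wraps hb0 ((hb.trans hkl).trans hc)
  have wkc := wraps hk (hkl.trans hc)
  have wlc := wraps hl hc
  have wbd := wraps_right wcd hd hb0 ((hb.trans hkl).trans hc)
  have wkd := wraps_right wcd hd hk (hkl.trans hc)
  have wld := wraps_right wcd hd hl hc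
  have := wac.lt'; have := wbd.lt'
  have abk : Pos D a sa b k (D.θ k) := by
    rcases pos_or_neg wab wak wbk with g | g
    · exact g
    · have := g.c_lt wbk wak.lt'; linarith
  have abl : Neg D a sa b l (D.θ l) := by
    rcases pos_or_neg wab wal wbl with g | g
    · exact (no_block_left hk hkl hmin wab ha (hb.trans hkl) (g.lt_c wbl wal.lt')).elim
    · exact g
  have lcd : Neg D l (D.θ l) c d sd := by
    rcases pos_or_neg wlc wld wcd with g | g
    · have := g.a_lt wlc wld.lt'; linarith
    · exact g
  have kcd : Pos D k (D.θ k) c d sd := by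
    rcases pos_or_neg wkc wkd wcd with g | g
    · exact g
    · exact (no_block_right hk hkl hmin wcd hd (hkl.trans hc) (g.lt_a wkc wkd.lt')).elim
  have bkl := lowest_neg hmin wkl wbk wbl hb0.le hl1.le
  have klc := lowest_pos hmin wkl wkc wlc hk.le (by linarith)
  have hadne : a ≠ d := by
    rintro rfl
    obtain ⟨m, hm⟩ := wab.hi
    obtain ⟨m', hm'⟩ := wcd.hj
    have hlt : sa + 1 ≤ sd := by
      by_contra hcon
      exact int_absurd (x := sd - sa) (m' - m) (by rw [hm, hm']; push_cast; ring)
        (by linarith) (by linarith)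
    obtain rfl : sd = sa + 1 := by linarith
    exact no_cycle wab wbc wcd
  have k1 := abk.lt_c wbk wak.lt'
  have k2 := kcd.a_lt wkc wkd.lt'
  have l1 := abl.c_lt wbl wal.lt'
  have l2 := lcd.lt_a wlc wld.lt'
  have caseA : Pos D a sa b c (D.θ c) → False := by
    intro abc
    have c1 := abc.lt_c wbc wac.lt'
    rw [← wcd.val_left] at c1
    have hkd := wkd.lt'
    exact double_cross wab.ne wcd.ne wac.ne hadne wbc.ne wbd.ne (p := D.θ k) (q := D.θ l)
      (p' := D.θ l) (q' := D.θ c) (by linarith) (by linarith) (by linarith) (by linarith)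
      ((Icc_subset_Icc (by linarith) (by linarith)).trans wab.sub)
      ((Icc_subset_Icc (by linarith) (by linarith)).trans wcd.sub')
      ((Icc_subset_Icc (by linarith) (by linarith)).trans wab.sub)
      ((Icc_subset_Icc (by linarith) (by linarith)).trans wcd.sub')
      (wab.cont.mono (Icc_subset_Icc (by linarith) (by linarith)))
      (wcd.cont'.mono (Icc_subset_Icc (by linarith) (by linarith)))
      (wab.cont.mono (Icc_subset_Icc (by linarith) (by linarith)))
      (wcd.cont'.mono (Icc_subset_Icc (by linarith) (by linarith)))
      (by linarith) (by linarith) (by linarith) (by linarith)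
  have caseB : Neg D b (D.θ b) c d sd → False := by
    intro bcd
    have b1 := bcd.lt_a wbc wbd.lt'
    rw [← wab.val_right] at b1
    have hkd := wkd.lt'
    exact double_cross wcd.ne wab.ne wac.ne.symm wbc.ne.symm hadne.symm wbd.ne.symm
      (p := D.θ b) (q := D.θ k)
      (p' := D.θ k) (q' := D.θ l) (by linarith) (by linarith) (by linarith) (by linarith)
      ((Icc_subset_Icc (by linarith) (by linarith)).trans wcd.sub')
      ((Icc_subset_Icc (by linarith) (by linarith)).trans wab.sub)
      ((Icc_subset_Icc (by linarith) (by linarith)).trans wcd.sub')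
      ((Icc_subset_Icc (by linarith) (by linarith)).trans wab.sub)
      (wcd.cont'.mono (Icc_subset_Icc (by linarith) (by linarith)))
      (wab.cont.mono (Icc_subset_Icc (by linarith) (by linarith)))
      (wcd.cont'.mono (Icc_subset_Icc (by linarith) (by linarith)))
      (wab.cont.mono (Icc_subset_Icc (by linarith) (by linarith)))
      (by linarith) (by linarith) (by linarith) (by linarith)
  rcases pos_or_neg wbk wbc wkc with bkc | bkc
  · -- `ab < bk < bc` leaves only the lexicographic order for `abc`
    refine caseA ?_
    rcases pos_or_neg wab wac wbc with g | g
    · exact g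
    · exfalso
      have m1 : D.θ c < (D.θ c + (sa + 1)) / 2 := by linarith
      have m2 : (D.θ c + (sa + 1)) / 2 < sa + 1 := by linarith
      have e1 := g.abbc _ ⟨m1.le, m2.le⟩
      have e2 := abk.abbc ((D.θ c + (sa + 1)) / 2) ⟨by linarith, m2.le⟩
      have e3 := bkc.abac ((D.θ c + (sa + 1)) / 2) ⟨m1.le, by linarith⟩
      linarith
  · rcases pos_or_neg wbl wbc wlc with blc | blc
    · exact no_NNPP wbk wbl wbc wkl wkc wlc bkl bkc blc klc
    · -- `cd < lc < bc` leaves only the antilexicographic order for `bcd`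
      refine caseB ?_
      rcases pos_or_neg wbc wbd wcd with g | g
      · exfalso
        have m1 : sd < (sd + (D.θ b + 1)) / 2 := by linarith
        have m2 : (sd + (D.θ b + 1)) / 2 < D.θ b + 1 := by linarith
        have e1 := g.abbc _ ⟨m1.le, m2.le⟩
        have e2 := lcd.abbc ((sd + (D.θ b + 1)) / 2) ⟨m1.le, by linarith⟩
        have e3 := blc.acbc ((sd + (D.θ b + 1)) / 2) ⟨by linarith, m2.le⟩
        linarith
      · exact g

end lowest

/-- Some vertex has no edge below it: if the edge lowest on the distinguished ray ends on that
ray, its end there; otherwise one of its two endpoints. -/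
theorem exists_visible (hn : 2 ≤ n) (D : Cyl n) :
    ∃ m, ∀ i j, i ≠ j → D.θ m ∈ D.dom i j → D.y m ≤ D.val i j (D.θ m) := by
  have : Nonempty {p : Fin n × Fin n // p.1 ≠ p.2} :=
    ⟨⟨(⟨0, by omega⟩, ⟨1, by omega⟩), by simp⟩⟩
  obtain ⟨⟨⟨k₀, l₀⟩, hne⟩, hmin₀⟩ := Finite.exists_min
    (fun p : {p : Fin n × Fin n // p.1 ≠ p.2} => D.val p.1.1 p.1.2 0)
  obtain ⟨k, l, sk, sl, w, h0, h1, h2, hmin⟩ : ∃ k l sk sl, D.W k sk l sl ∧ 0 ≤ sk ∧ sk < sl ∧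
      sl ≤ 1 ∧ ∀ i j, i ≠ j → D.val k l 0 ≤ D.val i j 0 := by
    obtain ⟨s, t, h0, h1, h2, w | w⟩ := D.arc k₀ l₀ hne
    · exact ⟨k₀, l₀, s, t, w, h0, h1, h2, fun i j h => hmin₀ ⟨(i, j), h⟩⟩
    · exact ⟨l₀, k₀, s, t, w, h0, h1, h2, fun i j h => by
        rw [D.val_symm l₀ k₀]; exact hmin₀ ⟨(i, j), h⟩⟩
  by_cases hk0 : D.θ k = 0
  · refine ⟨k, fun i j hij _ => ?_⟩
    rw [← D.val_θ k l w.ne, hk0]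
    exact hmin i j hij
  by_cases hl0 : D.θ l = 0
  · refine ⟨l, fun i j hij _ => ?_⟩
    rw [← D.val_θ l k w.ne.symm, hl0, D.val_symm]
    exact hmin i j hij
  have hk : 0 < D.θ k := lt_of_le_of_ne (D.θ_mem k).1 (Ne.symm hk0)
  have hl : 0 < D.θ l := lt_of_le_of_ne (D.θ_mem l).1 (Ne.symm hl0)
  have ek := eq_θ w.hi h0 (by linarith)
  have el := eq_θ_right w.hj (by linarith) h2 hl
  have hkl : D.θ k < D.θ l := by linarith
  have hmin1 : ∀ i j, i ≠ j → D.val k l 1 ≤ D.val i j 1 := by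
    intro i j h
    rw [← zero_add (1 : ℝ), D.val_add_one, D.val_add_one]
    exact hmin i j h
  by_contra! hcon
  obtain ⟨i, j, hij, hd, hv⟩ := hcon k
  obtain ⟨i', j', hij', hd', hv'⟩ := hcon l
  rcases block hk hij hd hv with ⟨a, sa, b, sb, wab, ha, hb, hab⟩ | ⟨c, sc, d, sd, wcd, g1, g2, g3⟩
  · rcases block hl hij' hd' hv' with
      ⟨c, sc, d, sd, wcd, g1, g2, g3⟩ | ⟨c, sc, d, sd, wcd, g1, g2, g3⟩
    · exact no_block_left hk hkl hmin1 wcd g1 g2 g3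
    · exact no_block_both hk hkl hmin1 wab ha hb hab wcd g1 g2 g3
  · exact no_block_right hk hkl hmin1 wcd g1 g2 g3

end Cyl

/-! ### Polar coordinates -/

section Polar

/-- The point at angle `φ + 2πt` and distance `exp z` from `O`. -/
noncomputable def pol (O : Pt) (φ t z : ℝ) : Pt :=
  (O.1 + Real.exp z * Real.cos (φ + 2 * Real.pi * t),
    O.2 + Real.exp z * Real.sin (φ + 2 * Real.pi * t))

variable {O : Pt} {φ : ℝ}

lemma pol_complex (t z : ℝ) :
    (⟨(pol O φ t z).1 - O.1, (pol O φ t z).2 - O.2⟩ : ℂ) =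
      Complex.exp ⟨z, φ + 2 * Real.pi * t⟩ := by
  apply Complex.ext <;> simp [pol, Complex.exp_re, Complex.exp_im]

lemma pol_inj {t z t' z' : ℝ} (h : pol O φ t z = pol O φ t' z') :
    z = z' ∧ ∃ m : ℤ, t = t' + m := by
  have e : Complex.exp ⟨z, φ + 2 * Real.pi * t⟩ = Complex.exp ⟨z', φ + 2 * Real.pi * t'⟩ := by
    rw [← pol_complex (O := O), ← pol_complex (O := O), h]
  obtain ⟨m, hm⟩ := Complex.exp_eq_exp_iff_exists_int.1 e
  have h1 := congrArg Complex.re hm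
  have h2 := congrArg Complex.im hm
  simp at h1 h2
  refine ⟨h1, m, ?_⟩
  have := Real.pi_pos
  have : 2 * Real.pi * (t - (t' + m)) = 0 := by linarith
  have : t - (t' + m) = 0 := by
    rcases mul_eq_zero.1 this with h | h
    · linarith
    · exact h
  linarith

lemma pol_add_int (t z : ℝ) (m : ℤ) : pol O φ (t + m) z = pol O φ t z := by
  have : φ + 2 * Real.pi * (t + m) = φ + 2 * Real.pi * t + m * (2 * Real.pi) := by ring
  simp only [pol, this, Real.cos_add_int_mul_two_pi, Real.sin_add_int_mul_two_pi]

lemma pol_ne (t z : ℝ) : pol O φ t z ≠ O := by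
  intro h
  have := pol_complex (O := O) (φ := φ) t z
  rw [h] at this
  exact Complex.exp_ne_zero _ (by rw [← this]; simp; rfl)

lemma eq_pol {p : Pt} {c : ℂ} (hc : Complex.exp c = ⟨p.1 - O.1, p.2 - O.2⟩) :
    pol O φ ((c.im - φ) / (2 * Real.pi)) c.re = p := by
  have e : φ + 2 * Real.pi * ((c.im - φ) / (2 * Real.pi)) = c.im := by
    have := Real.pi_pos.ne'
    field_simp; ring
  have h1 := congrArg Complex.re hc
  have h2 := congrArg Complex.im hc
  simp only [Complex.exp_re, Complex.exp_im] at h1 h2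
  simp only [pol, e]
  ext <;> simp [h1, h2]

lemma complex_ne_zero {p : Pt} (hp : p ≠ O) : (⟨p.1 - O.1, p.2 - O.2⟩ : ℂ) ≠ 0 := by
  intro h
  have h1 := congrArg Complex.re h
  have h2 := congrArg Complex.im h
  simp at h1 h2
  exact hp (Prod.ext (by linarith) (by linarith))

lemma exists_pol (φ : ℝ) {p : Pt} (hp : p ≠ O) :
    ∃ t ∈ Ico (0 : ℝ) 1, ∃ z, pol O φ t z = p := by
  have e := eq_pol (φ := φ) (Complex.exp_log (complex_ne_zero hp))
  generalize ((Complex.log ⟨p.1 - O.1, p.2 - O.2⟩).im - φ) / (2 * Real.pi) = t at e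
  rw [← Int.fract_add_floor t, pol_add_int] at e
  exact ⟨Int.fract t, ⟨Int.fract_nonneg t, Int.fract_lt_one t⟩, _, e⟩

@[fun_prop]
lemma continuous_pol : Continuous (fun x : ℝ × ℝ => pol O φ x.1 x.2) := by
  unfold pol; fun_prop

lemma exists_dir {d : Pt} (hd : d ≠ 0) :
    ∃ φ R : ℝ, 0 < R ∧ d = (R * Real.cos φ, R * Real.sin φ) := by
  have h := complex_ne_zero (O := (0 : Pt)) hd
  refine ⟨Complex.arg ⟨d.1, d.2⟩, ‖(⟨d.1, d.2⟩ : ℂ)‖, ?_, ?_⟩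
  · simpa using h
  · have := Complex.norm_mul_cos_arg ⟨d.1, d.2⟩
    have := Complex.norm_mul_sin_arg ⟨d.1, d.2⟩
    ext <;> simp_all

lemma pol_mem_ray (t z : ℝ) : pol O φ t z ∈
    rayFrom O (Real.cos (φ + 2 * Real.pi * t), Real.sin (φ + 2 * Real.pi * t)) :=
  ⟨Real.exp z, (Real.exp_pos z).le, by ext <;> simp [pol]⟩

lemma dir_ne_zero (x : ℝ) : ((Real.cos x, Real.sin x) : Pt) ≠ 0 := by
  intro h
  have h1 : Real.cos x = 0 := congrArg Prod.fst h
  have h2 : Real.sin x = 0 := congrArg Prod.snd h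
  have := Real.sin_sq_add_cos_sq x
  simp [h1, h2] at this

lemma ray_pol {R : ℝ} (hR : 0 < R) {p : Pt} (hp : p ≠ O)
    (h : p ∈ rayFrom O (R * Real.cos φ, R * Real.sin φ)) : ∃ z, pol O φ 0 z = p := by
  obtain ⟨s, hs, rfl⟩ := h
  have hs : 0 < s := lt_of_le_of_ne hs (by rintro rfl; simp at hp)
  refine ⟨Real.log (s * R), ?_⟩
  ext <;> simp [pol, Real.exp_log (mul_pos hs hR)] <;> ring

/-- The angles (in turns) at which `A` is met by a ray from `O`. -/
def pdom (O : Pt) (φ : ℝ) (A : Set Pt) : Set ℝ := {t | ∃ z, pol O φ t z ∈ A}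

open Classical in
/-- The logarithmic distance from `O` at which `A` meets the ray at angle `t` (`0` outside
`pdom`). -/
noncomputable def pval (O : Pt) (φ : ℝ) (A : Set Pt) (t : ℝ) : ℝ :=
  if h : ∃ z, pol O φ t z ∈ A then h.choose else 0

lemma pval_mem {A : Set Pt} {t : ℝ} (h : t ∈ pdom O φ A) : pol O φ t (pval O φ A t) ∈ A := by
  have h' : ∃ z, pol O φ t z ∈ A := h
  rw [pval, dif_pos h']; exact h'.choose_spec

/-- Every ray from `O` meets `A` at most once. -/
def PMono (O : Pt) (φ : ℝ) (A : Set Pt) : Prop :=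
  ∀ t z z', pol O φ t z ∈ A → pol O φ t z' ∈ A → z = z'

lemma PMono.pval_eq {A : Set Pt} (hA : PMono O φ A) {t z : ℝ} (h : pol O φ t z ∈ A) :
    pval O φ A t = z := hA t _ _ (pval_mem ⟨z, h⟩) h

/-- A path avoiding `O` has continuous polar coordinates, by lifting it through `exp`. -/
lemma exists_lift {f : unitInterval → Pt} (hf : Continuous f) (hO : ∀ s, f s ≠ O) :
    ∃ α z : unitInterval → ℝ, Continuous α ∧ Continuous z ∧ ∀ s, pol O φ (α s) (z s) = f s := by
  let γ : C(unitInterval, {z : ℂ // z ≠ 0}) :=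
    ⟨fun s => ⟨⟨(f s).1 - O.1, (f s).2 - O.2⟩, complex_ne_zero (hO s)⟩, by
      refine Continuous.subtype_mk ?_ _
      have : Continuous fun s => Complex.equivRealProdCLM.symm ((f s).1 - O.1, (f s).2 - O.2) := by
        fun_prop
      exact this⟩
  obtain ⟨e, he⟩ : ∃ e, Complex.exp e = (γ 0 : ℂ) := ⟨_, Complex.exp_log (γ 0).2⟩
  obtain ⟨Γ, hΓ, -⟩ := Complex.isCoveringMap_exp.exists_path_lifts γ e (Subtype.ext he.symm)
  refine ⟨fun s => ((Γ s).im - φ) / (2 * Real.pi), fun s => (Γ s).re, ?_, ?_, fun s => ?_⟩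
  · have := Γ.continuous
    fun_prop
  · have := Γ.continuous
    fun_prop
  · apply eq_pol
    have := congrArg Subtype.val (congrFun hΓ s)
    exact this

/-- In polar coordinates, an arc that meets each ray from `O` at most once, and the ray at angle
`0` exactly once, is a graph over an interval around `0` shorter than a full turn. -/
lemma exists_chart {A : Set Pt} {p q : Pt} (hA : IsSimpleArc A p q) (hO : O ∉ A)
    (hm : PMono O φ A) (h0 : 0 ∈ pdom O φ A) :
    ∃ a b : ℝ, a ≤ 0 ∧ 0 ≤ b ∧ a < b ∧ b < a + 1 ∧ Icc a b ⊆ pdom O φ A ∧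
      ContinuousOn (pval O φ A) (Icc a b) ∧
      (∀ x ∈ pdom O φ A, ∃ m : ℤ, x + m ∈ Icc a b) ∧
      (((∃ z, p = pol O φ a z) ∧ ∃ z, q = pol O φ b z) ∨
        ((∃ z, q = pol O φ a z) ∧ ∃ z, p = pol O φ b z)) := by
  obtain ⟨f, fc, fi, rfl, rfl, rfl⟩ := hA
  obtain ⟨α₀, z, α₀c, zc, hp₀⟩ := exists_lift (O := O) (φ := φ)
    (f := fun s : unitInterval => f s) (continuousOn_iff_continuous_domRestrict.1 fc)
    (fun s h => hO ⟨s, s.2, h⟩)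
  obtain ⟨z₀, s₀, hs₀, e₀⟩ := h0
  obtain ⟨-, m₀, hm₀⟩ := pol_inj (e₀.symm.trans (hp₀ ⟨s₀, hs₀⟩).symm)
  obtain ⟨α, hα⟩ : ∃ α : unitInterval → ℝ, α = fun s => α₀ s + m₀ := ⟨_, rfl⟩
  have αc : Continuous α := by rw [hα]; fun_prop
  have hp : ∀ s, pol O φ (α s) (z s) = f s := fun s => by rw [hα, pol_add_int]; exact hp₀ s
  have hα0 : α ⟨s₀, hs₀⟩ = 0 := by rw [hα]; exact hm₀.symm
  have mem : ∀ s : unitInterval, f s ∈ f '' Icc 0 1 := fun s => ⟨s, s.2, rfl⟩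
  have key : ∀ s s' : unitInterval, ∀ m : ℤ, α s = α s' + m → s = s' := by
    intro s s' m e
    have h1 := hp s
    rw [e, pol_add_int] at h1
    have hz := hm _ _ _ (h1 ▸ mem s) (hp s' ▸ mem s')
    rw [hz, hp s'] at h1
    exact (Subtype.ext (fi s'.2 s.2 h1)).symm
  have αi : Function.Injective α := fun s s' h => key s s' 0 (by simpa using h)
  obtain ⟨a, b, hab, hr, hend⟩ : ∃ a b, a < b ∧ range α = Icc a b ∧
      ((a = α 0 ∧ b = α 1) ∨ (a = α 1 ∧ b = α 0)) := by
    rcases αc.strictMono_of_inj_boundedOrder' αi with h | h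
    · refine ⟨α 0, α 1, h (by simp), ?_, Or.inl ⟨rfl, rfl⟩⟩
      apply Subset.antisymm
      · rintro _ ⟨s, rfl⟩; exact ⟨h.monotone s.2.1, h.monotone s.2.2⟩
      · exact intermediate_value_univ 0 1 αc
    · refine ⟨α 1, α 0, h (by simp), ?_, Or.inr ⟨rfl, rfl⟩⟩
      apply Subset.antisymm
      · rintro _ ⟨s, rfl⟩; exact ⟨h.antitone s.2.2, h.antitone s.2.1⟩
      · exact intermediate_value_univ 1 0 αc
  have h0 : (0 : ℝ) ∈ Icc a b := by rw [← hr]; exact ⟨_, hα0⟩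
  refine ⟨a, b, h0.1, h0.2, hab, ?_, ?_, ?_, ?_, ?_⟩
  · by_contra! hcon
    obtain ⟨s, hs⟩ : a ∈ range α := by rw [hr]; exact left_mem_Icc.2 hab.le
    obtain ⟨s', hs'⟩ : a + 1 ∈ range α := by rw [hr]; exact ⟨by linarith, hcon⟩
    have := key s' s 1 (by rw [hs', hs]; simp)
    subst this; linarith
  · rw [← hr]; rintro _ ⟨s, rfl⟩
    exact ⟨z s, hp s ▸ mem s⟩
  · rw [← hr]
    have emb := (αc.isClosedEmbedding αi).isEmbedding
    rw [continuousOn_iff_continuous_domRestrict]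
    have : (range α).domRestrict (pval O φ (f '' Icc 0 1)) = z ∘ emb.toHomeomorph.symm := by
      funext x
      obtain ⟨s, rfl⟩ := emb.toHomeomorph.surjective x
      simp only [Function.comp, Homeomorph.symm_apply_apply]
      exact hm.pval_eq (hp s ▸ mem s)
    rw [this]
    exact zc.comp emb.toHomeomorph.symm.continuous
  · rintro x ⟨w, s, hs, e⟩
    obtain ⟨-, m, hm⟩ := pol_inj (e.symm.trans (hp ⟨s, hs⟩).symm)
    refine ⟨-m, ?_⟩
    rw [← hr, hm]
    exact ⟨⟨s, hs⟩, by push_cast; ring⟩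
  · have e0 := hp 0
    have e1 := hp 1
    rcases hend with ⟨rfl, rfl⟩ | ⟨rfl, rfl⟩
    · exact Or.inl ⟨⟨_, e0.symm⟩, ⟨_, e1.symm⟩⟩
    · exact Or.inr ⟨⟨_, e1.symm⟩, ⟨_, e0.symm⟩⟩

end Polar

/-! ### Cells of the drawing -/

namespace SimpleDrawing

variable {n : ℕ} {D : SimpleDrawing n} {O : Pt} {φ : ℝ}

lemma arc_subset {i j : Fin n} (h : i ≠ j) : D.arc i j ⊆ D.drawingSet := fun _ hx =>
  mem_iUnion.2 ⟨i, mem_iUnion.2 ⟨j, mem_iUnion.2 ⟨h, hx⟩⟩⟩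

lemma vtx_mem {i j : Fin n} (h : i ≠ j) : D.vtx i ∈ D.arc i j := by
  obtain ⟨f, -, -, h0, -, e⟩ := D.arc_simple i j h
  rw [e]; exact ⟨0, by simp, h0⟩

lemma isCompact_drawingSet : IsCompact D.drawingSet := by
  refine isCompact_iUnion fun i => isCompact_iUnion fun j => isCompact_iUnion fun h => ?_
  obtain ⟨f, fc, -, -, -, e⟩ := D.arc_simple i j h
  rw [e]; exact isCompact_Icc.image_of_continuousOn fc

lemma pMono (hD : D.CMonotoneAt O) {i j : Fin n} (h : i ≠ j) : PMono O φ (D.arc i j) :=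
  fun t z z' hz hz' => (pol_inj (hD.2 _ (dir_ne_zero _) i j h
    ⟨pol_mem_ray t z, hz⟩ ⟨pol_mem_ray t z', hz'⟩)).1

lemma exists_ne (hn : 2 ≤ n) (i : Fin n) : ∃ j, i ≠ j := by
  have : Nontrivial (Fin n) := Fin.nontrivial_iff_two_le.2 hn
  obtain ⟨j, hj⟩ := _root_.exists_ne i
  exact ⟨j, hj.symm⟩

/-- A c-monotone drawing all of whose edges meet the ray at angle `0`, in polar coordinates. -/
lemma exists_cyl (hn : 2 ≤ n) (hD : D.CMonotoneAt O)
    (h0 : ∀ i j, i ≠ j → 0 ∈ pdom O φ (D.arc i j)) :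
    ∃ C : Cyl n, (∀ i j, C.dom i j = pdom O φ (D.arc i j)) ∧
      (∀ i j, C.val i j = pval O φ (D.arc i j)) ∧ ∀ i, pol O φ (C.θ i) (C.y i) = D.vtx i := by
  have hO : ∀ i, D.vtx i ≠ O := fun i h => by
    obtain ⟨j, hj⟩ := exists_ne hn i
    exact hD.1 (h ▸ arc_subset hj (vtx_mem hj))
  choose θ hθ y hy using fun i => exists_pol φ (hO i)
  have hv : ∀ i j, i ≠ j → pol O φ (θ i) (y i) ∈ D.arc i j := fun i j h => by
    rw [hy]; exact vtx_mem h
  have hval : ∀ i j, i ≠ j → pval O φ (D.arc i j) (θ i) = y i := fun i j h =>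
    (pMono hD h).pval_eq (hv i j h)
  have hend : ∀ i t z, D.vtx i = pol O φ t z → ∃ m : ℤ, t = θ i + m := fun i t z h =>
    (pol_inj (h.symm.trans (hy i).symm)).2
  refine ⟨{ θ := θ, y := y
            dom := fun i j => pdom O φ (D.arc i j)
            val := fun i j => pval O φ (D.arc i j)
            θ_mem := hθ
            θ_inj := ?_
            dom_symm := fun i j => by rw [D.arc_symm]
            val_symm := fun i j => by rw [D.arc_symm]
            dom_add_one := ?_
            val_add_one := ?_
            θ_mem_dom := fun i j h => ⟨y i, hv i j h⟩
            val_θ := hval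
            adj := ?_
            indep := ?_
            arc := ?_ }, fun _ _ => rfl, fun _ _ => rfl, hy⟩
  · intro i j e
    by_contra h
    have hj := hv j i (Ne.symm h)
    rw [← e, D.arc_symm] at hj
    have hz := pMono hD h _ _ _ (hv i j h) hj
    apply h
    apply D.vtx_inj
    rw [← hy, ← hy, e, hz]
  · intro i j t
    have := fun z => pol_add_int (O := O) (φ := φ) t z 1
    simp only [Int.cast_one] at this
    change (∃ z, _) ↔ ∃ z, _
    simp only [this]
  · intro i j t
    have : pol O φ (t + 1) = pol O φ t := by
      funext z; rw [← pol_add_int t z 1, Int.cast_one]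
    unfold pval
    rw [this]
  · intro i j k t hij hik hjk hj hk e
    have h1 := pval_mem hj
    have h2 := pval_mem hk
    rw [← e] at h2
    have : _ ∈ D.arc i j ∩ D.arc i k := ⟨h1, h2⟩
    rw [D.adj_inter i j k hij hik hjk] at this
    exact hend i _ _ (Eq.symm this)
  · intro i j k l t t' hij hkl hik hil hjk hjl h1 h2 e h1' h2' e'
    have a1 := pval_mem h1
    have a2 := pval_mem h2
    have b1 := pval_mem h1'
    have b2 := pval_mem h2'
    rw [← e] at a2
    rw [← e'] at b2
    exact (pol_inj (D.indep_inter i j k l hij hkl hik hil hjk hjl ⟨b1, b2⟩ ⟨a1, a2⟩)).2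
  · intro i j h
    obtain ⟨a, b, ha, hb, hab, hba, sub, cont, cover, hends⟩ :=
      exists_chart (D.arc_simple i j h) (fun hO => hD.1 (arc_subset h hO)) (pMono hD h) (h0 i j h)
    -- the part of the chart between `b` and `a + 1` is shifted by one turn
    have sub' : Icc (a + 1) (b + 1) ⊆ pdom O φ (D.arc i j) := by
      intro x hx
      obtain ⟨z, hz⟩ := sub (a := x - 1) ⟨by linarith [hx.1], by linarith [hx.2]⟩
      refine ⟨z, ?_⟩
      rw [← pol_add_int _ _ 1] at hz
      simpa using hz
    have cont' : ContinuousOn (pval O φ (D.arc i j)) (Icc (a + 1) (b + 1)) := by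
      have hmap : MapsTo (fun x : ℝ => x - 1) (Icc (a + 1) (b + 1)) (Icc a b) :=
        fun x hx => ⟨by linarith [hx.1], by linarith [hx.2]⟩
      refine (cont.comp (f := fun x : ℝ => x - 1) (by fun_prop) hmap).congr fun x hx => ?_
      have h1 := pval_mem (sub (hmap hx))
      rw [← pol_add_int _ _ 1] at h1
      simp only [Int.cast_one, sub_add_cancel] at h1
      exact (pMono hD h).pval_eq h1
    have cover' : ∀ x ∈ pdom O φ (D.arc i j), ∃ m : ℤ, x + m ∈ Icc (a + 1) (b + 1) := by
      intro x hx
      obtain ⟨m, hm⟩ := cover x hx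
      exact ⟨m + 1, by push_cast; linarith [hm.1], by push_cast; linarith [hm.2]⟩
    have shift : ∀ i, (∃ m : ℤ, a = θ i + m) → ∃ m : ℤ, a + 1 = θ i + m := by
      rintro i ⟨m, rfl⟩
      exact ⟨m + 1, by push_cast; ring⟩
    refine ⟨b, a + 1, hb, hba, by linarith, ?_⟩
    rcases hends with ⟨⟨z, hz⟩, ⟨w, hw⟩⟩ | ⟨⟨z, hz⟩, ⟨w, hw⟩⟩
    · refine Or.inr ⟨hend _ _ _ hw, shift _ (hend _ _ _ hz), hba, by linarith, ?_, ?_, ?_⟩ <;>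
      · rw [D.arc_symm]; assumption
    · exact Or.inl ⟨hend _ _ _ hw, shift _ (hend _ _ _ hz), hba, by linarith, sub', cont', cover'⟩

lemma not_mem_drawingSet {t z : ℝ}
    (h : ∀ i j, i ≠ j → pol O φ t z ∉ D.arc i j) : pol O φ t z ∉ D.drawingSet := by
  simpa [drawingSet] using h

/-- A point that can be seen from `O` is in the closure of the cell of `O`. -/
lemma mem_closure_center (hO : O ∉ D.drawingSet) {t y : ℝ}
    (h : ∀ z < y, pol O φ t z ∉ D.drawingSet) :
    pol O φ t y ∈ closure (connectedComponentIn D.drawingSetᶜ O) := by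
  let g : ℝ → Pt := fun r => (O.1 + r * Real.cos (φ + 2 * Real.pi * t),
    O.2 + r * Real.sin (φ + 2 * Real.pi * t))
  have gc : Continuous g := by fun_prop
  have hsub : g '' Ico 0 (Real.exp y) ⊆ connectedComponentIn D.drawingSetᶜ O := by
    refine (isPreconnected_Ico.image g gc.continuousOn).subset_connectedComponentIn
      ⟨0, ⟨le_rfl, Real.exp_pos y⟩, by simp [g]⟩ ?_
    rintro _ ⟨r, hr, rfl⟩
    rcases hr.1.eq_or_lt with rfl | hr0
    · simpa [g] using hO
    · have := h (Real.log r) ((Real.log_lt_iff_lt_exp hr0).2 hr.2)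
      rwa [pol, Real.exp_log hr0] at this
  refine closure_mono hsub (image_closure_subset_closure_image gc ⟨Real.exp y, ?_, rfl⟩)
  rw [closure_Ico (Real.exp_pos y).ne]
  exact ⟨(Real.exp_pos y).le, le_rfl⟩

/-- A point that can be seen from infinity, looking towards `O`, is in the closure of the
unbounded cell. -/
lemma mem_closure_unbounded {t y : ℝ} (h : ∀ z, y < z → pol O φ t z ∉ D.drawingSet)
    {C : Set Pt} (hC : D.IsCell C) (hb : ¬ Bornology.IsBounded C) : pol O φ t y ∈ closure C := by
  obtain ⟨Z, hZ⟩ : ∃ Z : ℝ, ∀ t z, pol O φ t z ∈ D.drawingSet → z ≤ Z := by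
    obtain ⟨Z, hZ⟩ := isCompact_drawingSet.exists_bound_of_continuousOn (s := D.drawingSet)
      (f := fun p : Pt => Complex.equivRealProdCLM.symm (p.1 - O.1, p.2 - O.2))
      (Continuous.continuousOn (by fun_prop))
    refine ⟨Z, fun t z hz => ?_⟩
    have h1 : ‖(⟨(pol O φ t z).1 - O.1, (pol O φ t z).2 - O.2⟩ : ℂ)‖ ≤ Z := hZ _ hz
    rw [pol_complex, Complex.norm_exp] at h1
    linarith [Real.add_one_le_exp z]
  obtain ⟨x, -, rfl⟩ := hC
  obtain ⟨p, hpC, s, z, hz, rfl⟩ : ∃ p ∈ connectedComponentIn D.drawingSetᶜ x,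
      ∃ s z, Z < z ∧ pol O φ s z = p := by
    by_contra! hcon
    refine hb (Metric.isBounded_closedBall (x := O) (r := Real.exp Z) |>.subset fun p hp => ?_)
    by_cases hpO : p = O
    · rw [hpO]; exact Metric.mem_closedBall_self (Real.exp_pos Z).le
    obtain ⟨s, -, z, rfl⟩ := exists_pol φ hpO
    have hz : z ≤ Z := not_lt.1 fun hz => hcon _ hp s z hz rfl
    have hz := Real.exp_le_exp.2 hz
    have key : ∀ c : ℝ, |c| ≤ 1 → |Real.exp z * c| ≤ Real.exp Z := fun c hc => by
      rw [abs_mul, Real.abs_exp]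
      nlinarith [Real.exp_pos z, abs_nonneg c]
    simp only [Metric.mem_closedBall, Prod.dist_eq, pol, Real.dist_eq, add_sub_cancel_left,
      max_le_iff]
    exact ⟨key _ (Real.abs_cos_le_one _), key _ (Real.abs_sin_le_one _)⟩
  rw [connectedComponentIn_eq hpC]
  have gc : Continuous fun x : ℝ × ℝ => pol O φ x.1 x.2 := continuous_pol
  let S : Set (ℝ × ℝ) := {t} ×ˢ Ioi y
  let U : Set (ℝ × ℝ) := univ ×ˢ Ioi Z
  have hSU : IsPreconnected (S ∪ U) :=
    IsPreconnected.union (t, max y Z + 1)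
      ⟨rfl, lt_of_le_of_lt (le_max_left y Z) (lt_add_one _)⟩
      ⟨trivial, lt_of_le_of_lt (le_max_right y Z) (lt_add_one _)⟩
      (isPreconnected_singleton.prod isPreconnected_Ioi)
      (isPreconnected_univ.prod isPreconnected_Ioi)
  have hsub : (fun x : ℝ × ℝ => pol O φ x.1 x.2) '' (S ∪ U) ⊆
      connectedComponentIn D.drawingSetᶜ (pol O φ s z) := by
    refine (hSU.image _ gc.continuousOn).subset_connectedComponentIn
      ⟨(s, z), Or.inr ⟨trivial, hz⟩, rfl⟩ ?_
    rintro _ ⟨⟨t', z'⟩, ⟨rfl, hz'⟩ | ⟨-, hz'⟩, rfl⟩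
    · exact h _ hz'
    · exact fun hmem => absurd (hZ _ _ hmem) (not_le.2 hz')
  refine closure_mono hsub (image_closure_subset_closure_image gc ⟨(t, y), ?_, rfl⟩)
  refine closure_mono subset_union_left ?_
  rw [closure_prod_eq, closure_Ioi]
  exact ⟨subset_closure rfl, self_mem_Ici⟩

end SimpleDrawing

/-- In a generalized twisted drawing of `K n` (`n ≥ 3`) with distinguished
point `O`, the cell containing `O` and the unbounded cell each have a vertex on their
boundary, i.e. both are vi-cells. -/
theorem stmt_15 (n : ℕ) (hn : 3 ≤ n) (D : SimpleDrawing n) (O d : Pt)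
    (hGT : D.GenTwistedAt O d) :
    (∃ i : Fin n, D.vtx i ∈ closure (connectedComponentIn D.drawingSetᶜ O)) ∧
    ∀ C : Set Pt, D.IsCell C → ¬ Bornology.IsBounded C →
      ∃ i : Fin n, D.vtx i ∈ closure C := by
  obtain ⟨hD, hd, hray⟩ := hGT
  obtain ⟨φ, R, hR, rfl⟩ := exists_dir hd
  have h0 : ∀ i j, i ≠ j → 0 ∈ pdom O φ (D.arc i j) := fun i j h => by
    obtain ⟨p, hp, hpA⟩ := hray i j h
    obtain ⟨z, rfl⟩ := ray_pol (O := O) (φ := φ) (p := p) hR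
      (fun e => hD.1 (SimpleDrawing.arc_subset h (e ▸ hpA))) hp
    exact ⟨z, hpA⟩
  have hn2 : 2 ≤ n := by omega
  obtain ⟨K, hdom, hval, hvtx⟩ := SimpleDrawing.exists_cyl hn2 hD h0
  constructor
  · obtain ⟨m, hm⟩ := K.exists_visible hn2
    refine ⟨m, ?_⟩
    rw [← hvtx m]
    refine SimpleDrawing.mem_closure_center hD.1 fun z hz =>
      SimpleDrawing.not_mem_drawingSet fun i j h hmem => ?_
    have := hm i j h (by rw [hdom]; exact ⟨z, hmem⟩)
    rw [hval, (SimpleDrawing.pMono hD h).pval_eq hmem] at this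
    linarith
  · intro C hC hb
    obtain ⟨m, hm⟩ := K.flip.exists_visible hn2
    refine ⟨m, ?_⟩
    rw [← hvtx m]
    refine SimpleDrawing.mem_closure_unbounded (fun z hz =>
      SimpleDrawing.not_mem_drawingSet fun i j h hmem => ?_) hC hb
    have : -K.y m ≤ -K.val i j (K.θ m) := hm i j h
      (by change K.θ m ∈ K.dom i j; rw [hdom]; exact ⟨z, hmem⟩)
    rw [hval, (SimpleDrawing.pMono hD h).pval_eq hmem] at this
    linarith
end

section
/- Let D be a simple drawing of K_n with n ≥ 4 and let (C_1, C_2) be a pair of antipodal vi-cells of D. Then there is no vertex of D that lies on the boundary of both C_1 and C_2. -/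
/-!
If a vertex `v` were on the boundary of both cells, pick (as `4 ≤ n`) a triangle on three other
vertices. Its edges are compact and avoid `v`, so a small ball around `v` is disjoint from the
triangle. Both cells meet this ball, which is connected, so the triangle does not separate them,
contradicting antipodality.
-/

open Set

theorem SimpleDrawing.isClosed_arc {n : ℕ} (D : SimpleDrawing n) {i j : Fin n} (h : i ≠ j) :
    IsClosed (D.arc i j) := by
  obtain ⟨f, hf, -, -, -, hA⟩ := D.arc_simple i j h
  rw [hA]
  exact (isCompact_Icc.image_of_continuousOn hf).isClosed

/-- In a simple drawing of `K n` (`n ≥ 4`) with a pair of antipodal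
vi-cells `(C₁, C₂)`, no vertex lies on the boundary of both cells. -/
theorem stmt_17 (n : ℕ) (hn : 4 ≤ n) (D : SimpleDrawing n) (C₁ C₂ : Set Pt)
    (h1 : D.IsViCell C₁) (h2 : D.IsViCell C₂) (hA : D.Antipodal C₁ C₂) :
    ∀ k : Fin n, ¬ (D.vtx k ∈ frontier C₁ ∧ D.vtx k ∈ frontier C₂) := by
  rintro k ⟨hk₁, hk₂⟩
  have hcard : 2 < (Finset.univ.erase k).card := by
    rw [Finset.card_erase_of_mem (Finset.mem_univ k), Finset.card_univ, Fintype.card_fin]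
    omega
  obtain ⟨a, b, c, ha, hb, hc, hab, hac, hbc⟩ := Finset.two_lt_card_iff.1 hcard
  have ha := Finset.ne_of_mem_erase ha
  have hb := Finset.ne_of_mem_erase hb
  have hc := Finset.ne_of_mem_erase hc
  have hopen : IsOpen (D.triangleSet a b c)ᶜ :=
    (((D.isClosed_arc hab).union (D.isClosed_arc hbc)).union (D.isClosed_arc hac)).isOpen_compl
  have hmem : D.vtx k ∈ (D.triangleSet a b c)ᶜ := by
    rintro ((h | h) | h)
    · exact D.vtx_not_mem a b k hab ha.symm hb.symm h
    · exact D.vtx_not_mem b c k hbc hb.symm hc.symm h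
    · exact D.vtx_not_mem a c k hac ha.symm hc.symm h
  obtain ⟨ε, hε, hball⟩ := Metric.isOpen_iff.1 hopen _ hmem
  obtain ⟨x, hx, hxd⟩ := Metric.mem_closure_iff.1 (frontier_subset_closure hk₁) ε hε
  obtain ⟨y, hy, hyd⟩ := Metric.mem_closure_iff.1 (frontier_subset_closure hk₂) ε hε
  have hxB : x ∈ Metric.ball (D.vtx k) ε := by rwa [Metric.mem_ball, dist_comm]
  have hyB : y ∈ Metric.ball (D.vtx k) ε := by rwa [Metric.mem_ball, dist_comm]
  have hconn : IsPreconnected (Metric.ball (D.vtx k) ε) := (convex_ball _ _).isPreconnected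
  exact hA a b c hab hbc hac x hx y hy
    (connectedComponentIn_eq (hconn.subset_connectedComponentIn hxB hball hyB))
end
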